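/- Let X be a real Banach space with the weak operator Daugavet property (WODP). Then for every x₁, …, x_n ∈ B_X, every ε > 0 and every x' ∈ B_X, the set OF(x₁,…,x_n; x', ε) is dense in B_X for the weak polynomial topology; that is, for every y ∈ B_X, every finite family p₁, …, p_k of continuous scalar polynomials on X and every δ > 0, there exists z ∈ OF(x₁,…,x_n; x', ε) with |p_j(z) − p_j(y)| < δ for every j ∈ {1, …, k}. -/

import Mathlib

/-!
The proof is a greedy averaging argument. Given scalar polynomials `p₁, …, p_k` and `y ∈ B_X`, put
`V w = ∑ j, (p_j w - p_j y) ^ 2`, so that `V y = 0`. The function `V` has a first order Taylor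
expansion at each point of `B_X` with quadratic remainder, uniformly on `B_X`
(`UniformTaylor`, `uniformTaylor_diag`, `UniformTaylor.sq`).

Fix a large `m` and pass from `y` to an average `(z₁ + ⋯ + z_m) / m` through the points
`w_j = (z₁ + ⋯ + z_j + (m - j) y) / m`. Each replacement changes `V` by
`L (z_{j+1} - y) / m + O(1 / m²)`, with `L` the derivative of `V` at `w_j`, and the WODP supplies
`z_{j+1}` with `L z_{j+1} < L y + η` (`exists_mem_OF_lt`). Hence `V w_m ≤ η + O(1 / m)`, which is
small. The operator attached to the average is a composition `T₁ ∘ ⋯ ∘ T_m`, where `T_{j+1}` sends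
`z_{j+1}` near `x'` and is chosen to almost fix the `x_i`, the point `x'`, and
the sum `z₁ + ⋯ + z_j` chosen so far (`greedy`). In this way only slices of the ball are needed.
-/

/-- The set `OF(x₁,…,x_n; x', ε)`: points `x` of the closed unit ball for which there is an
operator `T` with `‖T‖ ≤ 1` almost fixing each `x_i` and sending `x` close to `x'`. -/
def OF {X : Type*} [NormedAddCommGroup X] [NormedSpace ℝ X]
    {n : ℕ} (xs : Fin n → X) (x' : X) (ε : ℝ) : Set X :=
  {x | ‖x‖ ≤ 1 ∧ ∃ T : X →L[ℝ] X, ‖T‖ ≤ 1 ∧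
    (∀ i, ‖T (xs i) - xs i‖ < ε) ∧ ‖T x - x'‖ < ε}

/-- A continuous scalar polynomial on a real normed space `X`: a function of the form
`p x = c + ∑_{n=1}^{N} F n (x, …, x)` where each `F n` is a continuous `n`-linear form. -/
def IsScalarPoly {X : Type*} [NormedAddCommGroup X] [NormedSpace ℝ X] (p : X → ℝ) : Prop :=
  ∃ (N : ℕ) (c : ℝ) (F : (n : ℕ) → ContinuousMultilinearMap ℝ (fun _ : Fin n => X) ℝ),
    ∀ x : X, p x = c + ∑ n ∈ Finset.Icc 1 N, F n (fun _ => x)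

/-! ### Uniform first order expansions of polynomials -/

/-- `f` has, at every point of the closed unit ball, a first order expansion with remainder at most
`C * ‖h‖ ^ 2` for `‖h‖ ≤ 2`, where `C` also bounds the values of `f` and of its derivative on the
ball. The range `‖h‖ ≤ 2` suffices for displacements between points of the unit ball. -/
def UniformTaylor {X : Type*} [NormedAddCommGroup X] [NormedSpace ℝ X] (f : X → ℝ) : Prop :=
  ∃ C : ℝ, 0 ≤ C ∧ ∀ w : X, ‖w‖ ≤ 1 → |f w| ≤ C ∧ ∃ L : X →L[ℝ] ℝ, ‖L‖ ≤ C ∧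
    ∀ h : X, ‖h‖ ≤ 2 → |f (w + h) - f w - L h| ≤ C * ‖h‖ ^ 2

section Taylor

variable {X : Type*} [NormedAddCommGroup X] [NormedSpace ℝ X]

lemma UniformTaylor.const (c : ℝ) : UniformTaylor (fun _ : X => c) :=
  ⟨|c|, abs_nonneg c, fun w _ => ⟨le_rfl, 0, by simp, fun h _ => by
    simpa using by positivity⟩⟩

lemma UniformTaylor.add {f g : X → ℝ} (hf : UniformTaylor f) (hg : UniformTaylor g) :
    UniformTaylor (fun x => f x + g x) := by
  obtain ⟨C, hC, hf⟩ := hf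
  obtain ⟨D, hD, hg⟩ := hg
  refine ⟨C + D, by positivity, fun w hw => ?_⟩
  obtain ⟨hfw, L, hL, hfL⟩ := hf w hw
  obtain ⟨hgw, M, hM, hgM⟩ := hg w hw
  refine ⟨(abs_add_le _ _).trans (by linarith), L + M, (norm_add_le _ _).trans (by linarith),
    fun h hh => ?_⟩
  calc |f (w + h) + g (w + h) - (f w + g w) - (L + M) h|
      = |(f (w + h) - f w - L h) + (g (w + h) - g w - M h)| := by
        congr 1
        simp only [add_apply]
        ring
    _ ≤ _ := (abs_add_le _ _).trans (by linarith [hfL h hh, hgM h hh])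

lemma UniformTaylor.sum {ι : Type*} (s : Finset ι) {f : ι → X → ℝ}
    (hf : ∀ i ∈ s, UniformTaylor (f i)) : UniformTaylor (fun x => ∑ i ∈ s, f i x) := by
  classical
  induction s using Finset.induction_on with
  | empty => simpa using UniformTaylor.const (X := X) 0
  | insert a s ha ih =>
    simp only [Finset.sum_insert ha]
    exact (hf a (by simp)).add (ih fun i hi => hf i (by simp [hi]))

lemma UniformTaylor.sq {f : X → ℝ} (hf : UniformTaylor f) :
    UniformTaylor (fun x => f x ^ 2) := by
  obtain ⟨C, hC, hf⟩ := hf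
  refine ⟨11 * C ^ 2, by positivity, fun w hw => ?_⟩
  obtain ⟨hfw, L, hL, hfL⟩ := hf w hw
  refine ⟨?_, (2 * f w) • L, ?_, fun h hh => ?_⟩
  · rw [abs_pow]
    nlinarith [abs_nonneg (f w)]
  · rw [norm_smul, Real.norm_eq_abs, abs_mul, abs_two]
    nlinarith [mul_le_mul hfw hL (norm_nonneg _) hC, sq_nonneg C]
  · have hr := hfL h hh
    have hLh : |L h| ≤ C * ‖h‖ := L.le_of_opNorm_le hL h
    have hn := norm_nonneg h
    have hΔ : |f (w + h) - f w| ≤ 3 * C * ‖h‖ := by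
      have h1 : |f (w + h) - f w| ≤ |f (w + h) - f w - L h| + |L h| := by
        simpa using abs_add_le (f (w + h) - f w - L h) (L h)
      nlinarith [mul_le_mul_of_nonneg_left hh (mul_nonneg hC hn)]
    have key : f (w + h) ^ 2 - f w ^ 2 - ((2 * f w) • L) h
        = 2 * f w * (f (w + h) - f w - L h) + (f (w + h) - f w) ^ 2 := by
      simp only [smul_apply, smul_eq_mul]
      ring
    have h2 : |2 * f w * (f (w + h) - f w - L h)| ≤ 2 * (C * (C * ‖h‖ ^ 2)) := by
      rw [abs_mul, abs_mul, abs_two]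
      nlinarith [mul_le_mul hfw hr (abs_nonneg _) hC]
    have h3 : (f (w + h) - f w) ^ 2 ≤ (3 * C * ‖h‖) ^ 2 := sq_le_sq' (by
      linarith [neg_abs_le (f (w + h) - f w)]) ((le_abs_self _).trans hΔ)
    rw [key]
    refine (abs_add_le _ _).trans ?_
    rw [abs_of_nonneg (sq_nonneg (f (w + h) - f w))]
    nlinarith

lemma norm_diag_le {n : ℕ} (F : ContinuousMultilinearMap ℝ (fun _ : Fin n => X) ℝ) {w : X}
    (hw : ‖w‖ ≤ 1) : |F (fun _ => w)| ≤ ‖F‖ := by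
  have := F.le_opNorm (fun _ => w)
  simp only [Finset.prod_const] at this
  exact this.trans (mul_le_of_le_one_right (norm_nonneg _) (pow_le_one₀ (norm_nonneg _) hw))

/-- The radius `3` covers the points `w + h` with `‖w‖ ≤ 1` and `‖h‖ ≤ 2`. -/
lemma diag_lipschitz {n : ℕ} (F : ContinuousMultilinearMap ℝ (fun _ : Fin n => X) ℝ) {u v : X}
    (hu : ‖u‖ ≤ 3) (hv : ‖v‖ ≤ 3) :
    |F (fun _ => u) - F (fun _ => v)| ≤ ‖F‖ * (n * 3 ^ (n - 1)) * ‖u - v‖ := by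
  have h := F.norm_image_sub_le (fun _ => u) (fun _ => v)
  have h1 : ‖(fun _ : Fin n => u) - fun _ => v‖ ≤ ‖u - v‖ :=
    (pi_norm_le_iff_of_nonneg (norm_nonneg _)).2 fun _ => le_rfl
  have h2 : max ‖(fun _ : Fin n => u)‖ ‖(fun _ : Fin n => v)‖ ≤ 3 :=
    max_le ((pi_norm_le_iff_of_nonneg (by norm_num)).2 fun _ => hu)
      ((pi_norm_le_iff_of_nonneg (by norm_num)).2 fun _ => hv)
  refine h.trans ?_
  rw [Fintype.card_fin, mul_assoc ‖F‖ (n : ℝ) _]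
  gcongr

/-- The constant `c` depends on the degree only; the induction applies the hypothesis to the
contracted forms `F (w, ·)`, whose norm is at most `‖F‖`. -/
lemma exists_diag_taylor (n : ℕ) : ∃ c : ℝ, 0 ≤ c ∧
    ∀ (F : ContinuousMultilinearMap ℝ (fun _ : Fin n => X) ℝ) (w : X), ‖w‖ ≤ 1 →
      ∃ L : X →L[ℝ] ℝ, ‖L‖ ≤ c * ‖F‖ ∧ ∀ h : X, ‖h‖ ≤ 2 →
        |F (fun _ => w + h) - F (fun _ => w) - L h| ≤ c * ‖F‖ * ‖h‖ ^ 2 := by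
  induction n with
  | zero =>
    refine ⟨0, le_rfl, fun F w _ => ⟨0, by simp, fun h _ => ?_⟩⟩
    have : (fun _ : Fin 0 => w + h) = fun _ => w := Subsingleton.elim _ _
    simp [this]
  | succ n ih =>
    obtain ⟨c, hc, ih⟩ := ih
    refine ⟨c + 1 + n * 3 ^ (n - 1), by positivity, fun F w hw => ?_⟩
    have hcurry : ∀ x : X, ‖F.curryLeft x‖ ≤ ‖F‖ * ‖x‖ := fun x => by
      simpa using F.curryLeft.le_opNorm x
    have hFw : ‖F.curryLeft w‖ ≤ ‖F‖ :=
      (hcurry w).trans (mul_le_of_le_one_right (norm_nonneg _) hw)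
    have hdiag : ∀ x : X, F (fun _ => x) = F.curryLeft x (fun _ => x) := fun x => by
      rw [ContinuousMultilinearMap.curryLeft_apply]
      congr 1
      ext i
      refine Fin.cases ?_ (fun _ => ?_) i <;> simp
    obtain ⟨L, hL, hLr⟩ := ih (F.curryLeft w) w hw
    -- The second summand is `h ↦ F (h, w, …, w)`, the derivative in the first slot.
    let M : X →L[ℝ] ℝ :=
      (ContinuousMultilinearMap.apply ℝ (fun _ : Fin n => X) ℝ (fun _ => w)).comp F.curryLeft
    have hMa : ∀ h, M h = F.curryLeft h (fun _ => w) := fun h => rfl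
    have hM : ‖M‖ ≤ ‖F‖ := M.opNorm_le_bound (norm_nonneg _) fun h =>
      (norm_diag_le (F.curryLeft h) hw).trans (hcurry h)
    have hF := norm_nonneg F
    have hk : (0 : ℝ) ≤ n * 3 ^ (n - 1) := by positivity
    refine ⟨L + M, (norm_add_le _ _).trans ?_, fun h hh => ?_⟩
    · nlinarith [mul_le_mul_of_nonneg_left hFw hc, mul_nonneg hk hF]
    have e : F (fun _ => w + h) - F (fun _ => w) - (L + M) h
        = (F.curryLeft w (fun _ => w + h) - F.curryLeft w (fun _ => w) - L h)
          + (F.curryLeft h (fun _ => w + h) - F.curryLeft h (fun _ => w)) := by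
      rw [hdiag (w + h), hdiag w, map_add, add_apply,
        add_apply, hMa]
      ring
    have h1 := hLr h hh
    have h2 := diag_lipschitz (F.curryLeft h) (u := w + h) (v := w)
      ((norm_add_le _ _).trans (by linarith)) (by linarith)
    rw [add_sub_cancel_left] at h2
    have h3 : c * ‖F.curryLeft w‖ * ‖h‖ ^ 2 ≤ c * ‖F‖ * ‖h‖ ^ 2 := by gcongr
    have h4 : ‖F.curryLeft h‖ * (n * 3 ^ (n - 1)) * ‖h‖
        ≤ ‖F‖ * ‖h‖ * (n * 3 ^ (n - 1)) * ‖h‖ := by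
      gcongr
      exact hcurry h
    rw [e]
    refine (abs_add_le _ _).trans ?_
    nlinarith [mul_nonneg hF (sq_nonneg ‖h‖)]

lemma uniformTaylor_diag {n : ℕ} (F : ContinuousMultilinearMap ℝ (fun _ : Fin n => X) ℝ) :
    UniformTaylor (fun x => F (fun _ => x)) := by
  obtain ⟨c, hc, H⟩ := exists_diag_taylor (X := X) n
  have hF := norm_nonneg F
  refine ⟨(c + 1) * ‖F‖, by positivity, fun w hw => ⟨?_, ?_⟩⟩
  · nlinarith [norm_diag_le F hw, mul_nonneg hc hF]
  · obtain ⟨L, hL, hLr⟩ := H F w hw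
    refine ⟨L, by linarith, fun h hh => (hLr h hh).trans ?_⟩
    nlinarith [mul_nonneg hF (sq_nonneg ‖h‖)]

lemma IsScalarPoly.uniformTaylor {p : X → ℝ} (hp : IsScalarPoly p) : UniformTaylor p := by
  obtain ⟨N, c, F, h⟩ := hp
  rw [funext h]
  exact (UniformTaylor.const c).add (UniformTaylor.sum _ fun n _ => uniformTaylor_diag (F n))

end Taylor

/-! ### Greedy averaging over slices -/

section Greedy

variable {X : Type*} [NormedAddCommGroup X] [NormedSpace ℝ X]

/-- The slice condition of the WODP, for functionals that are not normalised and may vanish. -/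
lemma exists_mem_OF_lt [Nontrivial X]
    (hWODP : ∀ (n : ℕ) (xs : Fin n → X), (∀ i, ‖xs i‖ ≤ 1) →
      ∀ ε > (0 : ℝ), ∀ (x' : X), ‖x'‖ ≤ 1 →
        ∀ (f : X →L[ℝ] ℝ), ‖f‖ = 1 → ∀ α > (0 : ℝ), ∃ x ∈ OF xs x' ε, f x > 1 - α)
    {n : ℕ} (xs : Fin n → X) (hxs : ∀ i, ‖xs i‖ ≤ 1) {ε : ℝ} (hε : 0 < ε)
    {x' : X} (hx' : ‖x'‖ ≤ 1) {y : X} (hy : ‖y‖ ≤ 1) (g : X →L[ℝ] ℝ) {η : ℝ} (hη : 0 < η) :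
    ∃ z ∈ OF xs x' ε, g z < g y + η := by
  by_cases hg : g = 0
  · obtain ⟨a, ha⟩ := exists_ne (0 : X)
    obtain ⟨f, hf, -⟩ := exists_dual_vector ℝ a (by simpa using ha)
    obtain ⟨z, hz, -⟩ := hWODP n xs hxs ε hε x' hx' f hf 1 one_pos
    exact ⟨z, hz, by simpa [hg] using hη⟩
  · have hg0 : 0 < ‖g‖ := norm_pos_iff.2 hg
    obtain ⟨z, hz, hfz⟩ := hWODP n xs hxs ε hε x' hx' ((-‖g‖⁻¹) • g)
      (by rw [norm_smul, norm_neg, norm_inv, norm_norm, inv_mul_cancel₀ hg0.ne'])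
      (η / ‖g‖) (by positivity)
    refine ⟨z, hz, ?_⟩
    have h1 : -‖g‖ ≤ g y := by
      have : |g y| ≤ ‖g‖ * ‖y‖ := g.le_opNorm y
      nlinarith [neg_abs_le (g y)]
    have h2 : ‖g‖ * (((-‖g‖⁻¹) • g) z) = - g z := by
      simp only [smul_apply, smul_eq_mul]
      field_simp
    have h3 := mul_lt_mul_of_pos_left hfz hg0
    have h4 : ‖g‖ * (1 - η / ‖g‖) = ‖g‖ - η := by field_simp
    linarith

/-- The point `u` is `(z₁ + ⋯ + z_j) / m`; the remaining mass `1 - j / m` still sits at `y`. -/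
lemma greedy {x' y : X} (hx' : ‖x'‖ ≤ 1) (hy : ‖y‖ ≤ 1)
    (hslice : ∀ (n : ℕ) (xs : Fin n → X), (∀ i, ‖xs i‖ ≤ 1) → ∀ ε > (0 : ℝ),
      ∀ (g : X →L[ℝ] ℝ), ∀ η > (0 : ℝ), ∃ z ∈ OF xs x' ε, g z < g y + η)
    {V : X → ℝ} {C : ℝ} (hC : 0 ≤ C)
    (hV : ∀ w : X, ‖w‖ ≤ 1 → ∃ L : X →L[ℝ] ℝ,
      ∀ h : X, ‖h‖ ≤ 2 → |V (w + h) - V w - L h| ≤ C * ‖h‖ ^ 2)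
    {η : ℝ} (hη : 0 < η) {m : ℕ} (hm : 0 < m) (j : ℕ) (hj : j ≤ m) :
    ∀ (n : ℕ) (xs : Fin n → X), (∀ i, ‖xs i‖ ≤ 1) → ∀ ε > (0 : ℝ),
      ∃ (u : X) (T : X →L[ℝ] X), ‖u‖ ≤ (j : ℝ) / m ∧ ‖T‖ ≤ 1 ∧
        (∀ i, ‖T (xs i) - xs i‖ < ε) ∧ ‖T u - ((j : ℝ) / m) • x'‖ < ε ∧
        V (u + (1 - (j : ℝ) / m) • y) ≤ V y + j * (η / m + 4 * C / (m : ℝ) ^ 2) := by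
  have hm0 : (0 : ℝ) < m := by exact_mod_cast hm
  have hm1 : (1 : ℝ) ≤ m := by exact_mod_cast hm
  induction j with
  | zero =>
    intro n xs _ ε hε
    exact ⟨0, ContinuousLinearMap.id ℝ X, by simp, ContinuousLinearMap.norm_id_le,
      by simpa using fun _ => hε, by simpa using hε, by simp⟩
  | succ j ih =>
    intro n xs hxs ε hε
    have hjm : (j : ℝ) / m ≤ 1 := (div_le_one hm0).2 (by exact_mod_cast (Nat.le_of_succ_le hj))
    have hjm0 : (0 : ℝ) ≤ (j : ℝ) / m := by positivity
    obtain ⟨u, T, hu, hT, hTx, hTu, hVu⟩ := ih (Nat.le_of_succ_le hj) (n + 1) (Fin.cons x' xs)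
      (Fin.cases (by simpa using hx') (by simpa using hxs)) (ε / 4) (by positivity)
    set w : X := u + (1 - (j : ℝ) / m) • y with hw
    have hw1 : ‖w‖ ≤ 1 := by
      refine (norm_add_le _ _).trans ?_
      rw [norm_smul, Real.norm_of_nonneg (by linarith)]
      nlinarith
    obtain ⟨L, hL⟩ := hV w hw1
    obtain ⟨z, ⟨hz, S, hS, hSx, hSz⟩, hLz⟩ := hslice (n + 1) (Fin.cons u xs)
      (Fin.cases (by simpa using hu.trans hjm) (by simpa using hxs)) (ε / 4) (by positivity) L η hη
    have hTle : ∀ v, ‖T v‖ ≤ ‖v‖ := fun v => by simpa using T.le_of_opNorm_le hT v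
    have hTx' : ‖T x' - x'‖ < ε / 4 := by simpa using hTx 0
    have hSu : ‖S u - u‖ < ε / 4 := by simpa using hSx 0
    have hinv0 : (0 : ℝ) ≤ (m : ℝ)⁻¹ := by positivity
    have hinv1 : (m : ℝ)⁻¹ ≤ 1 := inv_le_one_of_one_le₀ hm1
    have hdiv : ((j + 1 : ℕ) : ℝ) / m = (j : ℝ) / m + (m : ℝ)⁻¹ := by
      push_cast
      field_simp
    refine ⟨u + (m : ℝ)⁻¹ • z, T.comp S, ?_, ?_, fun i => ?_, ?_, ?_⟩
    · rw [hdiv]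
      refine (norm_add_le _ _).trans ?_
      rw [norm_smul, Real.norm_of_nonneg hinv0]
      nlinarith
    · refine (T.opNorm_comp_le S).trans ?_
      nlinarith [norm_nonneg T, norm_nonneg S]
    · have h1 : ‖T (xs i) - xs i‖ < ε / 4 := by simpa using hTx i.succ
      have h2 : ‖S (xs i) - xs i‖ < ε / 4 := by simpa using hSx i.succ
      have e : T.comp S (xs i) - xs i = T (S (xs i) - xs i) + (T (xs i) - xs i) := by
        simp
      rw [e]
      refine (norm_add_le _ _).trans_lt ?_
      linarith [hTle (S (xs i) - xs i)]
    · have e : T.comp S (u + (m : ℝ)⁻¹ • z) - (((j + 1 : ℕ) : ℝ) / m) • x'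
          = (T (S u - u) + (T u - ((j : ℝ) / m) • x'))
            + (m : ℝ)⁻¹ • (T (S z - x') + (T x' - x')) := by
        rw [hdiv]
        simp only [ContinuousLinearMap.comp_apply, map_add, map_sub, map_smul]
        module
      have h1 := hTle (S u - u)
      have h2 := hTle (S z - x')
      have h3 : ‖(m : ℝ)⁻¹ • (T (S z - x') + (T x' - x'))‖ ≤ ‖T (S z - x')‖ + ‖T x' - x'‖ := by
        rw [norm_smul, Real.norm_of_nonneg hinv0]
        exact (mul_le_of_le_one_left (norm_nonneg _) hinv1).trans (norm_add_le _ _)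
      rw [e]
      refine (norm_add_le _ _).trans_lt ?_
      linarith [norm_add_le (T (S u - u)) (T u - ((j : ℝ) / m) • x')]
    · have hzy : ‖z - y‖ ≤ 2 := (norm_sub_le _ _).trans (by linarith)
      have hn : ‖(m : ℝ)⁻¹ • (z - y)‖ ≤ (m : ℝ)⁻¹ * 2 := by
        rw [norm_smul, Real.norm_of_nonneg hinv0]
        gcongr
      have e : u + (m : ℝ)⁻¹ • z + (1 - ((j + 1 : ℕ) : ℝ) / m) • y
          = w + (m : ℝ)⁻¹ • (z - y) := by
        rw [hdiv, hw]
        module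
      have h1 := le_of_abs_le (hL ((m : ℝ)⁻¹ • (z - y)) (by linarith))
      have h2 : C * ‖(m : ℝ)⁻¹ • (z - y)‖ ^ 2 ≤ 4 * C / (m : ℝ) ^ 2 := by
        calc C * ‖(m : ℝ)⁻¹ • (z - y)‖ ^ 2 ≤ C * ((m : ℝ)⁻¹ * 2) ^ 2 := by gcongr
          _ = 4 * C / (m : ℝ) ^ 2 := by
            field_simp
            ring
      have h3 : L ((m : ℝ)⁻¹ • (z - y)) ≤ η / m := by
        rw [map_smul, map_sub, smul_eq_mul, div_eq_inv_mul]
        exact mul_le_mul_of_nonneg_left (by linarith) hinv0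
      rw [e]
      push_cast
      linarith

end Greedy

/-- if `X` has the WODP, then every set `OF(x₁,…,x_n; x', ε)` is dense in
the closed unit ball for the weak polynomial topology. -/
theorem wodp_OF_weak_polynomially_dense
    {X : Type*} [NormedAddCommGroup X] [NormedSpace ℝ X] [CompleteSpace X]
    (hWODP : ∀ (n : ℕ) (xs : Fin n → X), (∀ i, ‖xs i‖ ≤ 1) →
      ∀ ε > (0 : ℝ), ∀ (x' : X), ‖x'‖ ≤ 1 →
        ∀ (f : X →L[ℝ] ℝ), ‖f‖ = 1 → ∀ α > (0 : ℝ),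
          ∃ x ∈ OF xs x' ε, f x > 1 - α) :
    ∀ (n : ℕ) (xs : Fin n → X), (∀ i, ‖xs i‖ ≤ 1) →
      ∀ ε > (0 : ℝ), ∀ (x' : X), ‖x'‖ ≤ 1 →
        ∀ (y : X), ‖y‖ ≤ 1 →
          ∀ (k : ℕ) (p : Fin k → (X → ℝ)), (∀ j, IsScalarPoly (p j)) →
            ∀ δ > (0 : ℝ),
              ∃ z ∈ OF xs x' ε, ∀ j : Fin k, |p j z - p j y| < δ := by
  intro n xs hxs ε hε x' hx' y hy k p hp δ hδ
  -- The WODP hypothesis is vacuous on the zero space, which has no functional of norm one.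
  rcases subsingleton_or_nontrivial X with hX | hX
  · refine ⟨y, ⟨hy, 0, by simp, fun i => ?_, ?_⟩, fun j => by simpa using hδ⟩
    · rw [Subsingleton.elim ((0 : X →L[ℝ] X) (xs i) - xs i) 0, norm_zero]
      exact hε
    · rw [Subsingleton.elim ((0 : X →L[ℝ] X) y - x') 0, norm_zero]
      exact hε
  have hV : UniformTaylor (fun x => ∑ j, (p j x + -p j y) ^ 2) :=
    UniformTaylor.sum _ fun j _ => ((hp j).uniformTaylor.add (UniformTaylor.const _)).sq
  obtain ⟨C, hC, hV⟩ := hV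
  have hδ2 : 0 < δ ^ 2 := by positivity
  obtain ⟨m, hm⟩ := exists_nat_gt (8 * C / δ ^ 2)
  have hm0 : (0 : ℝ) < m := lt_of_le_of_lt (by positivity) hm
  obtain ⟨u, T, hu, hT, hTx, hTu, hVu⟩ := greedy (V := fun x => ∑ j, (p j x + -p j y) ^ 2) hx' hy
    (fun n xs hxs ε hε g η hη => exists_mem_OF_lt hWODP xs hxs hε hx' hy g hη) hC
    (fun w hw => by
      obtain ⟨-, L, -, hL⟩ := hV w hw
      exact ⟨L, hL⟩)
    (η := δ ^ 2 / 2) (by positivity) (m := m) (by exact_mod_cast hm0) m le_rfl n xs hxs ε hε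
  rw [div_self hm0.ne'] at hu hTu hVu
  rw [one_smul] at hTu
  refine ⟨u, ⟨hu, T, hT, hTx, hTu⟩, fun j => abs_lt_of_sq_lt_sq ?_ hδ.le⟩
  have h1 : (m : ℝ) * (δ ^ 2 / 2 / m + 4 * C / (m : ℝ) ^ 2) = δ ^ 2 / 2 + 4 * C / m := by
    field_simp
  have h2 : 4 * C / m < δ ^ 2 / 2 := by
    rw [div_lt_iff₀ hδ2] at hm
    rw [div_lt_iff₀ hm0]
    linarith
  have h3 : (p j u + -p j y) ^ 2 ≤ ∑ i, (p i u + -p i y) ^ 2 :=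
    Finset.single_le_sum (f := fun i => (p i u + -p i y) ^ 2) (fun i _ => sq_nonneg _)
      (Finset.mem_univ j)
  simp only [sub_self, zero_smul, add_zero, h1, add_neg_cancel, ne_eq, OfNat.ofNat_ne_zero,
    not_false_eq_true, zero_pow, Finset.sum_const_zero, zero_add] at hVu
  rw [sub_eq_add_neg]
  linarith
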